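/- For every integer t ≥ 4, the monomial w_2^{2^{t-1}+2^{t-2}}·w_4^{2^{t-2}-2} belongs to the ideal I_{2^t-2,4} of F_2[w_2,w_3,w_4]. -/

import Mathlib

open MvPolynomial

/-- The polynomials `g_r = g_r^{(4)}` in `F_2[w_2,w_3,w_4]` (variables `X 0 = w_2`,
`X 1 = w_3`, `X 2 = w_4`): `g_0 = 1`, `g_r = 0` for `r < 0`, and
`g_r = w_2·g_{r-2} + w_3·g_{r-3} + w_4·g_{r-4}` for `r ≥ 1`. -/
noncomputable def g4 : ℤ → MvPolynomial (Fin 3) (ZMod 2)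
  | r =>
    if r ≤ 0 then (if r = 0 then 1 else 0)
    else X 0 * g4 (r - 2) + X 1 * g4 (r - 3) + X 2 * g4 (r - 4)
  termination_by r => r.toNat
  decreasing_by all_goals omega

/-- The ideal `I_{n,4} = (g_{n-3}, g_{n-2}, g_{n-1}, g_n)` of `F_2[w_2,w_3,w_4]`. -/
noncomputable def I4 (n : ℤ) : Ideal (MvPolynomial (Fin 3) (ZMod 2)) :=
  Ideal.span {g4 (n - 3), g4 (n - 2), g4 (n - 1), g4 n}


theorem g4_pos (r : ℤ) (h : 1 ≤ r) :
    g4 r = X 0 * g4 (r - 2) + X 1 * g4 (r - 3) + X 2 * g4 (r - 4) := by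
  rw [g4, if_neg (by omega)]

theorem g4_neg (r : ℤ) (h : r < 0) : g4 r = 0 := by
  rw [g4, if_pos (by omega), if_neg (by omega)]

theorem g4_zero : g4 0 = 1 := by
  rw [g4, if_pos (by omega), if_pos rfl]

theorem two_zero : (2 : MvPolynomial (Fin 3) (ZMod 2)) = 0 := CharTwo.two_eq_zero

theorem g4_sq (n : ℕ) : ∀ m : ℤ, m < n →
    g4 (2 * m) = g4 m ^ 2 + X 0 * g4 (m - 1) ^ 2 + X 2 * g4 (m - 2) ^ 2 ∧
    g4 (2 * m + 1) = X 1 * g4 (m - 1) ^ 2 := by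
  induction n with
  | zero =>
    intro m hm
    have hm : m < 0 := by simpa using hm
    rw [g4_neg (2 * m) (by omega), g4_neg (2 * m + 1) (by omega), g4_neg m hm,
      g4_neg (m - 1) (by omega), g4_neg (m - 2) (by omega)]
    simp
  | succ n ih =>
    intro m hm
    push_cast at hm
    rcases lt_trichotomy m 0 with h | h | h
    · rw [g4_neg (2 * m) (by omega), g4_neg (2 * m + 1) (by omega), g4_neg m h,
        g4_neg (m - 1) (by omega), g4_neg (m - 2) (by omega)]
      simp
    · subst h
      rw [g4_pos (2 * 0 + 1) (by norm_num)]
      norm_num [g4_zero, g4_neg]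
    · have e1 := ih (m - 1) (by omega)
      have e2 := ih (m - 2) (by omega)
      rw [show 2 * (m - 1) = 2 * m - 2 by ring, show 2 * m - 2 + 1 = 2 * m - 1 by ring,
        show m - 1 - 1 = m - 2 by ring, show m - 1 - 2 = m - 3 by ring] at e1
      rw [show 2 * (m - 2) = 2 * m - 4 by ring, show 2 * m - 4 + 1 = 2 * m - 3 by ring,
        show m - 2 - 1 = m - 3 by ring, show m - 2 - 2 = m - 4 by ring] at e2
      have r0 := g4_pos m (by omega)
      have r1 := g4_pos (2 * m) (by omega)
      have r2 := g4_pos (2 * m + 1) (by omega)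
      rw [show 2 * m + 1 - 2 = 2 * m - 1 by ring, show 2 * m + 1 - 3 = 2 * m - 2 by ring,
        show 2 * m + 1 - 4 = 2 * m - 3 by ring] at r2
      obtain ⟨e1, f1⟩ := e1
      obtain ⟨e2, f2⟩ := e2
      have h2 := two_zero
      constructor
      · rw [r1, e1, e2, f2, r0, CharTwo.add_sq, CharTwo.add_sq]
        linear_combination (X 0 * X 2 * g4 (m - 3) ^ 2) * h2
      · rw [r2, e1, f1, f2]
        linear_combination (X 0 * X 1 * g4 (m - 2) ^ 2 + X 1 * X 2 * g4 (m - 3) ^ 2) * h2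

theorem g4_even (m : ℤ) :
    g4 (2 * m) = g4 m ^ 2 + X 0 * g4 (m - 1) ^ 2 + X 2 * g4 (m - 2) ^ 2 :=
  (g4_sq (m.toNat + 1) m (by omega)).1

theorem g4_odd (m : ℤ) : g4 (2 * m + 1) = X 1 * g4 (m - 1) ^ 2 :=
  (g4_sq (m.toNat + 1) m (by omega)).2

theorem g4_three (t : ℕ) : g4 (2 ^ t - 3) = 0 := by
  induction t with
  | zero => exact g4_neg _ (by norm_num)
  | succ t ih =>
    rw [show (2 : ℤ) ^ (t + 1) - 3 = 2 * (2 ^ t - 2) + 1 by ring, g4_odd,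
      show (2 : ℤ) ^ t - 2 - 1 = 2 ^ t - 3 by ring, ih]
    simp

theorem g4_u (s : ℕ) : g4 (2 ^ (s + 2) - 2) =
    X 0 * g4 (2 ^ (s + 1) - 2) ^ 2 + X 1 ^ 2 * g4 (2 ^ s - 2) ^ 4 := by
  rw [show (2 : ℤ) ^ (s + 2) - 2 = 2 * (2 ^ (s + 1) - 1) by ring, g4_even,
    show (2 : ℤ) ^ (s + 1) - 1 - 2 = 2 ^ (s + 1) - 3 by ring, g4_three,
    show (2 : ℤ) ^ (s + 1) - 1 - 1 = 2 ^ (s + 1) - 2 by ring,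
    show (2 : ℤ) ^ (s + 1) - 1 = 2 * (2 ^ s - 1) + 1 by ring, g4_odd,
    show (2 : ℤ) ^ s - 1 - 1 = 2 ^ s - 2 by ring]
  ring

theorem g4_v (s : ℕ) : g4 (2 ^ (s + 1) - 4) =
    g4 (2 ^ s - 2) ^ 2 + X 2 * g4 (2 ^ s - 4) ^ 2 := by
  rw [show (2 : ℤ) ^ (s + 1) - 4 = 2 * (2 ^ s - 2) by ring, g4_even,
    show (2 : ℤ) ^ s - 2 - 2 = 2 ^ s - 4 by ring,
    show (2 : ℤ) ^ s - 2 - 1 = 2 ^ s - 3 by ring, g4_three]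
  ring

theorem g4_w (s : ℕ) : g4 (2 ^ (s + 1) - 5) = X 1 * g4 (2 ^ s - 4) ^ 2 := by
  rw [show (2 : ℤ) ^ (s + 1) - 5 = 2 * (2 ^ s - 3) + 1 by ring, g4_odd,
    show (2 : ℤ) ^ s - 3 - 1 = 2 ^ s - 4 by ring]

/-- The abstract argument, in a commutative ring. -/
theorem abstract_vanish {R : Type*} [CommRing R] (a b c : R) (U V : ℕ → R) (s : ℕ)
    (hU : ∀ k, k ≤ s → U k = a ^ 2 ^ k * U (k + 1) + b ^ 2 ^ (k + 1) * U (k + 2))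
    (hV : ∀ k, k ≤ s → V k = U (k + 1) + c ^ 2 ^ k * V (k + 1))
    (h1 : U (s + 1) = 1) (h2 : U (s + 2) = 0) (h3 : V (s + 1) = 0)
    (hs : 1 ≤ s) (hU0 : U 0 = 0) (hV0 : V 0 = 0) (hb : b * V 1 = 0) :
    a ^ (3 * 2 ^ s) * c ^ (2 ^ s - 2) = 0 := by
  have hU1 : U 1 = - (c * V 1) := by
    have := hV 0 (by omega)
    simp only [hV0, pow_zero, pow_one, zero_add] at this
    linear_combination -this
  -- powers of b kill U
  have key1 : ∀ k, k ≤ s + 1 → b ^ (2 ^ k - 1) * U k = 0 ∧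
      b ^ (2 ^ (k + 1) - 1) * U (k + 1) = 0 := by
    intro k
    induction k with
    | zero =>
      intro _
      refine ⟨by simp [hU0], ?_⟩
      simp only [zero_add, pow_one, hU1]
      norm_num
      linear_combination c * hb
    | succ k ih =>
      intro hk
      obtain ⟨i1, i2⟩ := ih (by omega)
      refine ⟨i2, ?_⟩
      have e := hU k (by omega)
      have hp : 1 ≤ 2 ^ k := Nat.one_le_two_pow
      have x1 : b ^ (2 ^ (k + 1 + 1) - 1) = b ^ (2 ^ (k + 1) - 1) * b ^ (2 ^ (k + 1)) := by
        rw [← pow_add]; congr 1; simp only [pow_succ]; omega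
      have x2 : b ^ (2 ^ (k + 1) - 1) = b ^ (2 ^ k) * b ^ (2 ^ k - 1) := by
        rw [← pow_add]; congr 1; simp only [pow_succ]; omega
      rw [x1]
      rw [show k + 1 + 1 = k + 2 by rfl]
      have : b ^ (2 ^ (k + 1) - 1) * U k = 0 := by
        rw [x2]; linear_combination b ^ (2 ^ k) * i1
      rw [e] at this
      linear_combination this - a ^ 2 ^ k * i2
  have key1' : ∀ k, k ≤ s + 1 → b ^ (2 ^ k) * U k = 0 := by
    intro k hk
    have := (key1 k hk).1
    have x : b ^ (2 ^ k) = b * b ^ (2 ^ k - 1) := by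
      rw [← pow_succ']; congr 1; have : 1 ≤ 2 ^ k := Nat.one_le_two_pow
      omega
    rw [x]; linear_combination b * this
  -- b^(2^k) U_{k+1} is killed by a^(2^(s+1) - 2^k)
  have key2 : ∀ j k, k + j = s + 1 → ∀ e, 2 ^ k ≤ e →
      a ^ (2 ^ (s + 1) - 2 ^ k) * (b ^ e * U (k + 1)) = 0 := by
    intro j
    induction j with
    | zero =>
      intro k hk e he
      have : k = s + 1 := by omega
      subst this
      simp [h2]
    | succ j ih =>
      intro k hk e he
      have i := ih (k + 1) (by omega) (e + 2 ^ (k + 1)) (by omega)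
      have hle : 2 ^ (k + 1) ≤ 2 ^ (s + 1) := Nat.pow_le_pow_right (by norm_num) (by omega)
      have x : a ^ (2 ^ (s + 1) - 2 ^ k) = a ^ (2 ^ (s + 1) - 2 ^ (k + 1)) * a ^ 2 ^ k := by
        rw [← pow_add]; congr 1; rw [pow_succ 2 k] at *; omega
      have y := key1' k (by omega)
      have y' : b ^ e * U k = 0 := by
        obtain ⟨d, rfl⟩ := Nat.exists_eq_add_of_le he
        rw [pow_add]; linear_combination b ^ d * y
      rw [hU k (by omega)] at y'
      rw [x]
      rw [pow_add b, show k + 1 + 1 = k + 2 by rfl] at i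
      linear_combination a ^ (2 ^ (s + 1) - 2 ^ (k + 1)) * y' - i
  have key2' : ∀ k, k ≤ s + 1 → a ^ (2 ^ (s + 1)) * (b ^ 2 ^ k * U (k + 1)) = 0 := by
    intro k hk
    have i := key2 (s + 1 - k) k (by omega) (2 ^ k) le_rfl
    have hle : 2 ^ k ≤ 2 ^ (s + 1) := Nat.pow_le_pow_right (by norm_num) (by omega)
    have x : a ^ (2 ^ (s + 1)) = a ^ 2 ^ k * a ^ (2 ^ (s + 1) - 2 ^ k) := by
      rw [← pow_add]; congr 1; omega
    rw [x]; linear_combination a ^ 2 ^ k * i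
  -- U_k is killed
  have key3 : ∀ k, k ≤ s → a ^ (2 ^ (s + 1) + 2 ^ (k + 1)) * U (k + 1) = 0 := by
    have : ∀ k, k ≤ s + 1 → a ^ (2 ^ (s + 1) + (2 ^ k - 1)) * U k = 0 := by
      intro k
      induction k with
      | zero => intro _; simp [hU0]
      | succ k ih =>
        intro hk
        have i := ih (by omega)
        have y := key2' (k + 1) hk
        have hp : 1 ≤ 2 ^ k := Nat.one_le_two_pow
        have x : a ^ (2 ^ (s + 1) + (2 ^ (k + 1) - 1)) =
            a ^ (2 ^ (s + 1) + (2 ^ k - 1)) * a ^ 2 ^ k := by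
          rw [← pow_add]; congr 1; rw [pow_succ 2 k]; omega
        rw [hU k (by omega)] at i
        rw [x]
        rw [pow_add] at i ⊢
        rw [show k + 1 + 1 = k + 2 by rfl] at y
        linear_combination i - a ^ (2 ^ k - 1) * y
    intro k hk
    have y := this (k + 1) (by omega)
    have hp : 1 ≤ 2 ^ (k + 1) := Nat.one_le_two_pow
    have x : a ^ (2 ^ (s + 1) + 2 ^ (k + 1)) = a ^ (2 ^ (s + 1) + (2 ^ (k + 1) - 1)) * a := by
      rw [← pow_succ]; congr 1; omega
    rw [x]; linear_combination a * y
  -- V_1 is killed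
  have key4 : ∀ k, k ≤ s + 1 → a ^ (2 ^ k - 1) * U k * V 1 = 0 := by
    intro k
    induction k with
    | zero => intro _; simp [hU0]
    | succ k ih =>
      intro hk
      have i := ih (by omega)
      have hp : 1 ≤ 2 ^ k := Nat.one_le_two_pow
      have x : a ^ (2 ^ (k + 1) - 1) = a ^ (2 ^ k - 1) * a ^ 2 ^ k := by
        rw [← pow_add]; congr 1; rw [pow_succ 2 k]; omega
      have z : b ^ 2 ^ (k + 1) = b * b ^ (2 ^ (k + 1) - 1) := by
        rw [← pow_succ']; congr 1; rw [pow_succ 2 k]; omega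
      rw [hU k (by omega), z] at i
      rw [x]
      linear_combination i - a ^ (2 ^ k - 1) * b ^ (2 ^ (k + 1) - 1) * U (k + 2) * hb
  have key5 : a ^ (3 * 2 ^ s) * V 1 = 0 := by
    have y := key4 (s + 1) le_rfl
    have hp : 1 ≤ 2 ^ s := Nat.one_le_two_pow
    have x : a ^ (3 * 2 ^ s) = a ^ (2 ^ s + 1) * a ^ (2 ^ (s + 1) - 1) := by
      rw [← pow_add]; congr 1; rw [pow_succ 2 s]; omega
    rw [h1] at y
    rw [x]; linear_combination a ^ (2 ^ s + 1) * y
  have key6 : ∀ k, k + 1 ≤ s → a ^ (3 * 2 ^ s) * (c ^ (2 ^ (k + 1) - 2) * V (k + 1)) = 0 := by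
    intro k
    induction k with
    | zero => intro _; simpa using key5
    | succ k ih =>
      intro hk
      have i := ih (by omega)
      have y := key3 (k + 1) (by omega)
      have hle : 2 ^ (k + 1 + 1) ≤ 2 ^ s := Nat.pow_le_pow_right (by norm_num) (by omega)
      have hp : 1 ≤ 2 ^ k := Nat.one_le_two_pow
      have x : a ^ (3 * 2 ^ s) = a ^ (2 ^ s - 2 ^ (k + 1 + 1)) *
          a ^ (2 ^ (s + 1) + 2 ^ (k + 1 + 1)) := by
        rw [← pow_add]; congr 1; rw [pow_succ 2 s]; omega
      have z : c ^ (2 ^ (k + 1 + 1) - 2) = c ^ (2 ^ (k + 1) - 2) * c ^ 2 ^ (k + 1) := by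
        rw [← pow_add]; congr 1; simp only [pow_succ]; omega
      have y' : a ^ (3 * 2 ^ s) * U (k + 1 + 1) = 0 := by
        rw [x]; linear_combination a ^ (2 ^ s - 2 ^ (k + 1 + 1)) * y
      rw [hV (k + 1) (by omega)] at i
      rw [z]
      linear_combination i - c ^ (2 ^ (k + 1) - 2) * y'
  obtain ⟨k, rfl⟩ := Nat.exists_eq_add_of_le' hs
  have f := key6 k le_rfl
  rw [hV (k + 1) le_rfl, h1, h3] at f
  linear_combination f

/-- Lemma 5.3(c): for every `t ≥ 4`, `w_2^{2^{t-1}+2^{t-2}} w_4^{2^{t-2}-2} ∈ I_{2^t-2,4}`. -/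
theorem stmt17 (t : ℕ) (ht : 4 ≤ t) :
    (X 0 : MvPolynomial (Fin 3) (ZMod 2)) ^ (2 ^ (t - 1) + 2 ^ (t - 2))
        * X 2 ^ (2 ^ (t - 2) - 2)
      ∈ I4 (2 ^ t - 2) := by
  obtain ⟨s, rfl⟩ := Nat.exists_eq_add_of_le' (show 2 ≤ t by omega)
  set q := Ideal.Quotient.mk (I4 (2 ^ (s + 2) - 2)) with hq
  have m1 : q (g4 (2 ^ (s + 2) - 5)) = 0 := by
    rw [hq, Ideal.Quotient.eq_zero_iff_mem]
    refine Ideal.subset_span ?_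
    rw [show (2 : ℤ) ^ (s + 2) - 5 = 2 ^ (s + 2) - 2 - 3 by ring]
    simp
  have m2 : q (g4 (2 ^ (s + 2) - 4)) = 0 := by
    rw [hq, Ideal.Quotient.eq_zero_iff_mem]
    refine Ideal.subset_span ?_
    rw [show (2 : ℤ) ^ (s + 2) - 4 = 2 ^ (s + 2) - 2 - 2 by ring]
    simp
  have m3 : q (g4 (2 ^ (s + 2) - 2)) = 0 := by
    rw [hq, Ideal.Quotient.eq_zero_iff_mem]
    refine Ideal.subset_span ?_
    simp
  rw [← Ideal.Quotient.eq_zero_iff_mem, ← hq]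
  have e : 2 ^ (s + 2 - 1) + 2 ^ (s + 2 - 2) = 3 * 2 ^ s := by
    rw [show s + 2 - 1 = s + 1 by omega, show s + 2 - 2 = s by omega]; ring
  rw [e, show s + 2 - 2 = s by omega, map_mul, map_pow, map_pow]
  refine abstract_vanish (q (X 0)) (q (X 1)) (q (X 2))
    (fun k => q (g4 (2 ^ (s + 2 - k) - 2) ^ 2 ^ k))
    (fun k => q (g4 (2 ^ (s + 2 - k) - 4) ^ 2 ^ k)) s ?_ ?_ ?_ ?_ ?_ (by omega) ?_ ?_ ?_
  · intro k hk
    obtain ⟨j, rfl⟩ := Nat.exists_eq_add_of_le' hk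
    rw [show j + k + 2 - k = j + 2 by omega, show j + k + 2 - (k + 1) = j + 1 by omega,
      show j + k + 2 - (k + 2) = j by omega, g4_u, add_pow_char_pow]
    simp only [map_add, map_mul, map_pow]
    ring
  · intro k hk
    obtain ⟨j, rfl⟩ := Nat.exists_eq_add_of_le' hk
    rw [show j + k + 2 - k = j + 1 + 1 by omega, show j + k + 2 - (k + 1) = j + 1 by omega,
      g4_v, add_pow_char_pow]
    simp only [map_add, map_mul, map_pow]
    ring
  · skip
    rw [show s + 2 - (s + 1) = 1 by omega]
    norm_num [g4_zero]
  · skip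
    rw [show s + 2 - (s + 2) = 0 by omega, g4_neg _ (by norm_num)]
    simp
  · skip
    rw [show s + 2 - (s + 1) = 1 by omega, g4_neg _ (by norm_num)]
    simp
  · simpa using m3
  · simpa using m2
  · skip
    rw [← map_mul, show s + 2 - 1 = s + 1 by omega, pow_one, ← g4_w]
    exact m1
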